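/- Let n ≥ 1 and 1 ≤ r ≤ n, and define F(A) = H_r(λ(A))^{1/r} for real symmetric n×n matrices A with eigenvalue vector λ(A) ∈ Γ_r. If A is symmetric with λ(A) ∈ Γ_r and B is symmetric with B − A positive semidefinite, then λ(B) ∈ Γ_r and F(B) ≥ F(A); moreover if B ≠ A then F(B) > F(A). -/

import Mathlib

/-!
The polynomial `det (1 + X A) = ∏ᵢ (1 + λᵢ X)` has coefficients `S_k(λ(A))`. Writing `B - A` as a
sum of rank-one matrices `v vᵀ`, it is enough to follow these coefficients when one such matrix is
added. In an eigenbasis of `A`, where `v` has coordinates `uᵢ`, the matrix determinant lemma gives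
`S_k(λ(A + v vᵀ)) = S_k(λ) + ∑ᵢ uᵢ² S_{k-1}(λ without λᵢ)` (`detGen_add_rankOne`).

For `λ ∈ Γ_r` and `1 ≤ k ≤ r` the numbers `S_{k-1}(λ without λᵢ)` are positive (`coeff_pos_of_mul`,
`symmGen_erase_pos`), which is a consequence of Newton's inequality (`newton_coeff`); the latter
follows from Laguerre's inequality and Rolle's theorem. Hence each of `S_1, …, S_r` increases, strictly
if `v ≠ 0`, so the eigenvalues stay in `Γ_r` and the rank-one steps can be iterated
(`detGen_coeff_sum`). Normalizing and taking the `r`-th root preserves strict inequalities between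
positive numbers.
-/

/-- The `r`-th elementary symmetric function of `x : Fin n → ℝ`. -/
def esymm (n r : ℕ) (x : Fin n → ℝ) : ℝ :=
  ∑ s ∈ Finset.powersetCard r (Finset.univ : Finset (Fin n)), ∏ i ∈ s, x i

/-- The Gårding cone `Γ_r = {x ∈ ℝⁿ : S_j(x) > 0 for j = 1, …, r}`. -/
def gardingCone (n r : ℕ) : Set (Fin n → ℝ) :=
  {x | ∀ j : ℕ, 1 ≤ j → j ≤ r → 0 < esymm n j x}

/-- The normalized curvature function `f(λ) = H_r(λ)^{1/r}`. -/
noncomputable def fcurv (n r : ℕ) (x : Fin n → ℝ) : ℝ :=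
  (esymm n r x / (n.choose r : ℝ)) ^ ((1 : ℝ) / r)

/-- The curvature operator `F(A) = H_r(λ(A))^{1/r}` on symmetric matrices. -/
noncomputable def Fmat (n r : ℕ) {A : Matrix (Fin n) (Fin n) ℝ}
    (hA : A.IsHermitian) : ℝ :=
  fcurv n r hA.eigenvalues

/-! ### Real-rooted polynomials and the Gårding cone -/

section Hyperbolic

open Polynomial

/-- Laguerre's inequality `p p'' ≤ (p')²` at `0` for a real-rooted `p`, in terms of coefficients.
The defect `a₁² - 2 a₀ a₂` of a product `f g` is `g(0)²` times that of `f` plus `f(0)²` times that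
of `g`, so it suffices to check linear factors. -/
lemma laguerre_zero {p : ℝ[X]} (hp : p.Splits) :
    2 * (p.coeff 0 * p.coeff 2) ≤ p.coeff 1 ^ 2 := by
  refine Submonoid.closure_induction (motive := fun (q : ℝ[X]) _ ↦
    2 * (q.coeff 0 * q.coeff 2) ≤ q.coeff 1 ^ 2) ?_ ?_ ?_ hp
  · rintro q (⟨a, rfl⟩ | ⟨a, rfl⟩)
    · simp [coeff_C]
    · simp [coeff_C, coeff_X]
  · simp [coeff_one]
  · intro f g _ _ hf hg
    have h0 : (f * g).coeff 0 = f.coeff 0 * g.coeff 0 := by simp [mul_coeff_zero]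
    have h1 : (f * g).coeff 1 = f.coeff 0 * g.coeff 1 + f.coeff 1 * g.coeff 0 := by
      simp [coeff_mul, Finset.Nat.antidiagonal_succ]
    have h2 : (f * g).coeff 2
        = f.coeff 0 * g.coeff 2 + f.coeff 1 * g.coeff 1 + f.coeff 2 * g.coeff 0 := by
      simp [coeff_mul, Finset.Nat.antidiagonal_succ, add_assoc]
    rw [h0, h1, h2]
    nlinarith [mul_nonneg (sq_nonneg (f.coeff 0)) (sub_nonneg.2 hg),
      mul_nonneg (sq_nonneg (g.coeff 0)) (sub_nonneg.2 hf)]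

/-- Real-rootedness passes to the derivative, by Rolle's theorem with multiplicities. -/
lemma splits_derivative {p : ℝ[X]} (hp : p.Splits) : (derivative p).Splits := by
  rw [splits_iff_card_roots] at hp ⊢
  have h1 := card_roots_le_derivative p
  have h2 := card_roots' (derivative p)
  have h3 := natDegree_derivative_le p
  by_cases h : p.natDegree = 0
  · omega
  · omega

/-- A weak form of Newton's inequality: Laguerre's inequality for the `k`-th derivative. -/
lemma newton_coeff (k : ℕ) {p : ℝ[X]} (hp : p.Splits) :
    (k + 2) * (p.coeff k * p.coeff (k + 2)) ≤ (k + 1) * p.coeff (k + 1) ^ 2 := by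
  induction k generalizing p with
  | zero => simpa using laguerre_zero hp
  | succ k ih =>
    have h := ih (splits_derivative hp)
    simp only [coeff_derivative] at h
    push_cast at h ⊢
    have hk : (0 : ℝ) < (k + 1) * (k + 2) := by positivity
    refine le_of_mul_le_mul_left ?_ hk
    rw [show k + 1 + 2 = k + 2 + 1 by ring]
    nlinarith [h]

/-- Deleting one variable sends `Γ_r` into `Γ_{r-1}`, in terms of generating polynomials. If `s_k` is
the first coefficient of `q` that fails to be positive, positivity of the coefficients `k` and `k+1`
of `(1 + aX) q` forces `a > 0` and `s_k² ≤ s_{k-1} s_{k+1}` with `s_{k-1} s_{k+1} > 0`, against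
Newton's inequality. -/
lemma coeff_pos_of_mul {q : ℝ[X]} (hq : q.Splits) (h0 : q.coeff 0 = 1) (a : ℝ) (r : ℕ)
    (hp : ∀ j, 1 ≤ j → j ≤ r → 0 < ((1 + C a * X) * q).coeff j) :
    ∀ k, k < r → 0 < q.coeff k := by
  have hc : ∀ j, ((1 + C a * X) * q).coeff (j + 1) = q.coeff (j + 1) + a * q.coeff j := by
    intro j
    rw [add_mul, one_mul, mul_assoc, coeff_add, coeff_C_mul, coeff_X_mul]
  intro k
  induction k with
  | zero => intro _; rw [h0]; exact one_pos
  | succ k ih =>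
    intro hk
    have hs := ih (by omega)
    have h1 := hp (k + 1) (by omega) (by omega)
    have h2 := hp (k + 2) (by omega) (by omega)
    rw [hc] at h1
    rw [show k + 2 = (k + 1) + 1 from rfl, hc] at h2
    by_contra! hneg
    have hN := newton_coeff k hq
    set s0 := q.coeff k
    set s1 := q.coeff (k + 1)
    rw [show k + 2 = (k + 1) + 1 from rfl] at hN
    set s2 := q.coeff (k + 1 + 1)
    have ha : 0 < a := by
      by_contra! ha
      nlinarith [mul_nonneg_of_nonpos_of_nonpos (sub_nonpos.2 ha) hneg, mul_nonneg (neg_nonneg.2 ha) hs.le]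
    have hs2 : 0 < s2 := by nlinarith [mul_nonneg ha.le (neg_nonneg.2 hneg)]
    have h3 : s1 ^ 2 ≤ s0 * s2 := by
      refine le_of_mul_le_mul_left ?_ ha
      nlinarith [mul_nonneg hs2.le h1.le, mul_nonneg h2.le (neg_nonneg.2 hneg)]
    have h4 : 0 < s0 * s2 := mul_pos hs hs2
    have hk0 : (0 : ℝ) ≤ k := k.cast_nonneg
    nlinarith [mul_le_mul_of_nonneg_left h3 (by positivity : (0 : ℝ) ≤ k + 1)]

/-- The generating polynomial `∏_{i ∈ s} (1 + xᵢ X)`, whose `k`-th coefficient is the `k`-th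
elementary symmetric function of the variables indexed by `s`. -/
noncomputable def symmGen {n : ℕ} (s : Finset (Fin n)) (x : Fin n → ℝ) : ℝ[X] :=
  ∏ i ∈ s, (1 + C (x i) * X)

lemma symmGen_coeff {n : ℕ} (x : Fin n → ℝ) (k : ℕ) :
    (symmGen Finset.univ x).coeff k = esymm n k x := by
  simp only [symmGen, esymm, Finset.prod_one_add, Finset.prod_mul_distrib, Finset.prod_const,
    finsetSum_coeff, ← map_prod, coeff_C_mul, coeff_X_pow, mul_ite, mul_one, mul_zero]
  rw [← Finset.sum_filter]
  refine Finset.sum_congr ?_ fun _ _ ↦ rfl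
  ext t
  simp [Finset.mem_powersetCard, eq_comm]

lemma symmGen_coeff_zero {n : ℕ} (s : Finset (Fin n)) (x : Fin n → ℝ) :
    (symmGen s x).coeff 0 = 1 := by
  simp [symmGen, coeff_zero_prod]

lemma symmGen_splits {n : ℕ} (s : Finset (Fin n)) (x : Fin n → ℝ) : (symmGen s x).Splits := by
  refine Splits.prod fun i _ ↦ Splits.of_natDegree_le_one ?_
  compute_degree

lemma symmGen_erase_pos {n r : ℕ} {x : Fin n → ℝ} (hx : x ∈ gardingCone n r) (i : Fin n) :
    ∀ k, k < r → 0 < (symmGen (Finset.univ.erase i) x).coeff k := by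
  refine coeff_pos_of_mul (symmGen_splits _ _) (symmGen_coeff_zero _ _) (x i) r ?_
  intro j h1 h2
  have : (1 + C (x i) * X) * symmGen (Finset.univ.erase i) x = symmGen Finset.univ x := by
    unfold symmGen
    exact Finset.mul_prod_erase Finset.univ (fun j ↦ 1 + C (x j) * X) (Finset.mem_univ i)
  rw [this, symmGen_coeff]
  exact hx j h1 h2

end Hyperbolic

/-! ### Rank-one perturbations of symmetric matrices -/

section Rank1

open Polynomial Matrix

/-- The polynomial `det (1 + X M)`. For symmetric `M` its `k`-th coefficient is `S_k(λ(M))`; it is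
defined without reference to a proof that `M` is symmetric. -/
noncomputable def detGen {n : ℕ} (M : Matrix (Fin n) (Fin n) ℝ) : ℝ[X] :=
  (1 + (X : ℝ[X]) • M.map C).det

lemma detGen_eval {n : ℕ} (M : Matrix (Fin n) (Fin n) ℝ) (t : ℝ) :
    (detGen M).eval t = (1 + t • M).det := by
  rw [detGen, ← coe_evalRingHom, RingHom.map_det]
  congr 1
  ext i j
  rcases eq_or_ne i j with rfl | h
  · simp [mul_comm t]
  · simp [h, mul_comm t]

lemma det_conj_one_add {n : ℕ} {U V : Matrix (Fin n) (Fin n) ℝ} (h : U * V = 1)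
    (N : Matrix (Fin n) (Fin n) ℝ) (t : ℝ) :
    (1 + t • (U * N * V)).det = (1 + t • N).det := by
  have : 1 + t • (U * N * V) = U * (1 + t • N) * V := by
    simp [mul_add, add_mul, h]
  rw [this, det_mul, det_mul, mul_right_comm, ← det_mul, h, det_one, one_mul]

lemma symmGen_eval {n : ℕ} (s : Finset (Fin n)) (x : Fin n → ℝ) (t : ℝ) :
    (symmGen s x).eval t = ∏ i ∈ s, (1 + x i * t) := by
  simp [symmGen, eval_prod]

/-- The spectral theorem in the form `A = U D Uᵀ` with plain matrices. -/
lemma hermitian_decomp {n : ℕ} {A : Matrix (Fin n) (Fin n) ℝ} (hA : A.IsHermitian) :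
    ∃ U V : Matrix (Fin n) (Fin n) ℝ, U * V = 1 ∧ V = Uᵀ ∧
      A = U * diagonal hA.eigenvalues * V := by
  refine ⟨hA.eigenvectorUnitary, star (hA.eigenvectorUnitary : Matrix (Fin n) (Fin n) ℝ),
    Unitary.coe_mul_star_self _, ?_, ?_⟩
  · rw [star_eq_conjTranspose, conjTranspose_eq_transpose_of_trivial]
  · conv_lhs => rw [hA.spectral_theorem, Unitary.conjStarAlgAut_apply]
    rfl

lemma detGen_eq_symmGen {n : ℕ} {A : Matrix (Fin n) (Fin n) ℝ} (hA : A.IsHermitian) :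
    detGen A = symmGen Finset.univ hA.eigenvalues := by
  obtain ⟨U, V, hUV, -, hAU⟩ := hermitian_decomp hA
  refine Polynomial.funext fun t ↦ ?_
  rw [detGen_eval, symmGen_eval]
  conv_lhs => rw [hAU]
  rw [det_conj_one_add hUV, ← diagonal_one, ← diagonal_smul, diagonal_add, det_diagonal]
  simp [mul_comm]

/-- The matrix determinant lemma for a rank-one perturbation of an invertible diagonal matrix. -/
lemma det_diagonal_add_rankOne {n : ℕ} (d u : Fin n → ℝ) (c : ℝ) (hd : ∀ i, d i ≠ 0) :
    (diagonal d + c • vecMulVec u u).det =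
      ∏ i, d i + c * ∑ i, u i ^ 2 * ∏ j ∈ Finset.univ.erase i, d j := by
  have hdet : IsUnit (diagonal d).det := by
    rw [det_diagonal, isUnit_iff_ne_zero]
    exact Finset.prod_ne_zero_iff.2 fun i _ ↦ hd i
  have h := det_add_replicateCol_mul_replicateRow (ι := Unit) hdet (c • u) u
  have h1 : replicateCol Unit (c • u) * replicateRow Unit u = c • vecMulVec u u := by
    ext i j
    simp [vecMulVec_apply, Matrix.mul_apply, mul_assoc]
  have hinv : (diagonal d)⁻¹ = diagonal fun i ↦ (d i)⁻¹ := by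
    refine inv_eq_right_inv ?_
    rw [diagonal_mul_diagonal, ← diagonal_one]
    congr 1
    ext i
    exact mul_inv_cancel₀ (hd i)
  have hent : (replicateRow Unit u * diagonal (fun i ↦ (d i)⁻¹) *
      replicateCol Unit (c • u)) default default = ∑ i, u i * (d i)⁻¹ * (c * u i) := by
    rw [Matrix.mul_apply]
    simp [mul_diagonal]
  rw [h1, hinv] at h
  rw [h, det_unique (n := Unit), Matrix.add_apply, one_apply_eq, hent, det_diagonal, mul_add, mul_one, Finset.mul_sum, Finset.mul_sum]
  congr 1
  refine Finset.sum_congr rfl fun i _ ↦ ?_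
  rw [← Finset.mul_prod_erase _ _ (Finset.mem_univ i)]
  have := hd i
  field_simp

/-- The effect of adding `w wᵀ`: comparing coefficients,
`S_k(A + w wᵀ) = S_k(λ) + ∑ᵢ uᵢ² S_{k-1}(λ without λᵢ)`, where `u` is `w` expressed in an
eigenbasis of `A`. -/
lemma detGen_add_rankOne {n : ℕ} {A : Matrix (Fin n) (Fin n) ℝ} (hA : A.IsHermitian)
    (w : Fin n → ℝ) : ∃ u : Fin n → ℝ, (w ≠ 0 → u ≠ 0) ∧
      detGen (A + vecMulVec w w) = symmGen Finset.univ hA.eigenvalues +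
        X * ∑ i, C (u i ^ 2) * symmGen (Finset.univ.erase i) hA.eigenvalues := by
  obtain ⟨U, V, hUV, hVU, hAU⟩ := hermitian_decomp hA
  have hw : U *ᵥ (V *ᵥ w) = w := by rw [mulVec_mulVec, hUV, one_mulVec]
  refine ⟨V *ᵥ w, fun h0 hu ↦ h0 (by rw [← hw, hu, mulVec_zero]), ?_⟩
  set u := V *ᵥ w
  set x := hA.eigenvalues
  have hconj : A + vecMulVec w w = U * (diagonal x + vecMulVec u u) * V := by
    rw [mul_add, add_mul, ← hAU, mul_vecMulVec, vecMulVec_mul, hw, hVU, vecMul_transpose, hw]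
  have hne : symmGen Finset.univ x ≠ 0 := fun h ↦ by
    simpa [h] using symmGen_coeff_zero Finset.univ x
  -- It suffices to compare values at those `t` for which `1 + t • diagonal x` is invertible.
  refine Polynomial.eq_of_infinite_eval_eq _ _ (Set.Infinite.mono ?_
    (Set.Finite.infinite_compl (symmGen Finset.univ x).roots.toFinset.finite_toSet))
  intro t ht
  have ht' : ∀ i, 1 + x i * t ≠ 0 := by
    simpa [hne, symmGen_eval, Finset.prod_eq_zero_iff] using ht
  have hmat : 1 + t • (diagonal x + vecMulVec u u)
      = diagonal (fun i ↦ 1 + x i * t) + t • vecMulVec u u := by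
    rw [smul_add, ← add_assoc, ← diagonal_one, ← diagonal_smul, diagonal_add]
    simp [mul_comm]
  rw [Set.mem_ofPred_eq, detGen_eval, hconj, det_conj_one_add hUV, hmat,
    det_diagonal_add_rankOne _ _ _ ht']
  simp [eval_finsetSum, symmGen_eval]

end Rank1

/-! ### Monotonicity of the elementary symmetric functions of the eigenvalues -/

lemma vecMulVec_self_isHermitian {n : ℕ} (w : Fin n → ℝ) :
    (Matrix.vecMulVec w w).IsHermitian := by
  ext i j
  simp [Matrix.vecMulVec_apply, mul_comm]

/-- Adding `w wᵀ` to a matrix with eigenvalues in `Γ_r` increases each of `S_1, …, S_r`, strictly if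
`w ≠ 0`. -/
lemma detGen_coeff_step {n r : ℕ} {A : Matrix (Fin n) (Fin n) ℝ} (hA : A.IsHermitian)
    (hAe : ∀ j, 1 ≤ j → j ≤ r → 0 < (detGen A).coeff j) (w : Fin n → ℝ) {j : ℕ}
    (h1 : 1 ≤ j) (h2 : j ≤ r) :
    (detGen A).coeff j ≤ (detGen (A + Matrix.vecMulVec w w)).coeff j ∧
      (w ≠ 0 → (detGen A).coeff j < (detGen (A + Matrix.vecMulVec w w)).coeff j) := by
  obtain ⟨u, hu, h⟩ := detGen_add_rankOne hA w
  have hx : hA.eigenvalues ∈ gardingCone n r := fun j h1 h2 ↦ by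
    rw [← symmGen_coeff, ← detGen_eq_symmGen]
    exact hAe j h1 h2
  obtain ⟨k, rfl⟩ : ∃ k, j = k + 1 := ⟨j - 1, by omega⟩
  have hpos := fun i ↦ symmGen_erase_pos hx i k (by omega)
  rw [h, detGen_eq_symmGen hA, Polynomial.coeff_add, Polynomial.coeff_X_mul,
    Polynomial.finsetSum_coeff]
  simp only [Polynomial.coeff_C_mul]
  have hnn : ∀ i ∈ Finset.univ, 0 ≤ u i ^ 2 *
      (symmGen (Finset.univ.erase i) hA.eigenvalues).coeff k :=
    fun i _ ↦ mul_nonneg (sq_nonneg _) (hpos i).le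
  refine ⟨le_add_of_nonneg_right (Finset.sum_nonneg hnn), fun hw ↦ lt_add_of_pos_right _ ?_⟩
  obtain ⟨i, hi⟩ := Function.ne_iff.1 (hu hw)
  exact Finset.sum_pos' hnn ⟨i, Finset.mem_univ i, mul_pos (sq_pos_of_ne_zero hi) (hpos i)⟩

lemma detGen_coeff_sum {n r : ℕ} {A : Matrix (Fin n) (Fin n) ℝ} (hA : A.IsHermitian)
    (hAe : ∀ j, 1 ≤ j → j ≤ r → 0 < (detGen A).coeff j) {m : ℕ} (v : Fin m → Fin n → ℝ)
    (s : Finset (Fin m)) :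
    (A + ∑ i ∈ s, Matrix.vecMulVec (v i) (v i)).IsHermitian ∧
    ∀ j, 1 ≤ j → j ≤ r →
      (detGen A).coeff j ≤ (detGen (A + ∑ i ∈ s, Matrix.vecMulVec (v i) (v i))).coeff j ∧
      ((∃ i ∈ s, v i ≠ 0) → (detGen A).coeff j <
        (detGen (A + ∑ i ∈ s, Matrix.vecMulVec (v i) (v i))).coeff j) := by
  induction s using Finset.induction_on with
  | empty => simpa using hA
  | insert a s ha ih =>
    obtain ⟨hH, ih⟩ := ih
    rw [Finset.sum_insert ha, add_comm (Matrix.vecMulVec _ _), ← add_assoc]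
    refine ⟨hH.add (vecMulVec_self_isHermitian _), fun j h1 h2 ↦ ?_⟩
    obtain ⟨h3, h4⟩ := ih j h1 h2
    obtain ⟨h5, h6⟩ := detGen_coeff_step hH
      (fun j h1 h2 ↦ (hAe j h1 h2).trans_le (ih j h1 h2).1) (v a) h1 h2
    refine ⟨h3.trans h5, ?_⟩
    rintro ⟨i, hi, hvi⟩
    rcases Finset.mem_insert.1 hi with rfl | hi
    · exact h3.trans_lt (h6 hvi)
    · exact (h4 ⟨i, hi, hvi⟩).trans_le h5

/-- Monotonicity of `F(A) = H_r(λ(A))^{1/r}`: if `A` is symmetric with `λ(A) ∈ Γ_r`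
and `B` is symmetric with `B − A` positive semidefinite, then `λ(B) ∈ Γ_r` and
`F(B) ≥ F(A)`; moreover if `B ≠ A` then `F(B) > F(A)`. -/
theorem Fmat_monotone (n r : ℕ) (hn : 1 ≤ n) (hr1 : 1 ≤ r) (hrn : r ≤ n)
    (A B : Matrix (Fin n) (Fin n) ℝ) (hA : A.IsHermitian) (hB : B.IsHermitian)
    (hAe : hA.eigenvalues ∈ gardingCone n r) (hBA : (B - A).PosSemidef) :
    hB.eigenvalues ∈ gardingCone n r ∧ Fmat n r hA ≤ Fmat n r hB ∧
      (B ≠ A → Fmat n r hA < Fmat n r hB) := by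
  obtain ⟨m, v, hv⟩ := Matrix.posSemidef_iff_eq_sum_vecMulVec.1 hBA
  simp only [star_trivial] at hv
  have hcA : ∀ j, (detGen A).coeff j = esymm n j hA.eigenvalues := fun j ↦ by
    rw [detGen_eq_symmGen hA, symmGen_coeff]
  have hcB : ∀ j, (detGen B).coeff j = esymm n j hB.eigenvalues := fun j ↦ by
    rw [detGen_eq_symmGen hB, symmGen_coeff]
  have key := (detGen_coeff_sum hA (r := r)
    (fun j h1 h2 ↦ by rw [hcA]; exact hAe j h1 h2) v Finset.univ).2
  rw [← hv, add_sub_cancel] at key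
  simp only [hcA, hcB] at key
  have hch : (0 : ℝ) < n.choose r := by exact_mod_cast Nat.choose_pos hrn
  have hexp : (0 : ℝ) < 1 / r := by positivity
  have hA0 : 0 ≤ esymm n r hA.eigenvalues / n.choose r := (div_pos (hAe r hr1 le_rfl) hch).le
  refine ⟨fun j h1 h2 ↦ (hAe j h1 h2).trans_le (key j h1 h2).1, ?_, fun hne ↦ ?_⟩
  · exact Real.rpow_le_rpow hA0 (div_le_div_of_nonneg_right (key r hr1 le_rfl).1 hch.le) hexp.le
  · refine Real.rpow_lt_rpow hA0 (div_lt_div_of_pos_right ((key r hr1 le_rfl).2 ?_) hch) hexp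
    by_contra! h
    refine hne (sub_eq_zero.1 (hv.trans (Finset.sum_eq_zero fun i hi ↦ ?_)))
    rw [h i hi, Matrix.zero_vecMulVec]
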